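/- arXiv:2005.10175 — 7 statements merged into one kernel-verified Lean document; each statement's English description precedes it below -/
import Mathlib

section
/- For every θ₁, θ₂ ∈ ℝ^N and every a ∈ A, the softmax policy satisfies |π_{θ₁}(a) − π_{θ₂}(a)| ≤ 2σ‖θ₁ − θ₂‖, i.e., for each fixed a the map θ ↦ π_θ(a) is 2σ-Lipschitz. -/
open scoped RealInnerProductSpace BigOperators

/-!
If every logit moves by at most `d`, then the numerator and the denominator of a softmax weight are
each multiplied by a factor in `[exp (-d), exp d]`, so the weight itself is multiplied by a factor
of at least `exp (-2d) ≥ 1 - 2d`. As the weight is at most `1`, it drops by at most `2d`. For the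
logits `σ⟪θ, φ a⟫`, Cauchy–Schwarz gives `d ≤ |σ| r ‖θ₁ - θ₂‖` whenever all `‖φ a‖ ≤ r`.
-/

section Softmax

variable {ι : Type*} [Fintype ι]

/-- The softmax (Gibbs) weights of a finite family of logits `x`, through which softmax policies
are expressed. The inverse temperature is not a separate parameter but part of `x`. -/
noncomputable def softmax (x : ι → ℝ) (i : ι) : ℝ :=
  Real.exp (x i) / ∑ j, Real.exp (x j)

lemma softmax_nonneg (x : ι → ℝ) (i : ι) : 0 ≤ softmax x i := by
  unfold softmax
  positivity

lemma softmax_le_one (x : ι → ℝ) (i : ι) : softmax x i ≤ 1 :=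
  div_le_one_of_le₀
    (Finset.single_le_sum (f := fun j ↦ Real.exp (x j)) (fun _ _ ↦ (Real.exp_pos _).le)
      (Finset.mem_univ i))
    (by positivity)

lemma exp_apply_le_exp_dist_mul (x y : ι → ℝ) (i : ι) :
    Real.exp (x i) ≤ Real.exp (dist x y) * Real.exp (y i) := by
  rw [← Real.exp_add, Real.exp_le_exp, ← sub_le_iff_le_add]
  exact (Real.sub_le_dist _ _).trans (dist_le_pi_dist x y i)

lemma sum_exp_le_exp_dist_mul (x y : ι → ℝ) :
    ∑ i, Real.exp (x i) ≤ Real.exp (dist x y) * ∑ i, Real.exp (y i) := by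
  rw [Finset.mul_sum]
  exact Finset.sum_le_sum fun i _ ↦ exp_apply_le_exp_dist_mul x y i

lemma softmax_le_exp_two_mul_dist_mul (x y : ι → ℝ) (i : ι) :
    softmax x i ≤ Real.exp (2 * dist x y) * softmax y i := by
  have : Nonempty ι := ⟨i⟩
  have hx : 0 < ∑ j, Real.exp (x j) := by positivity
  have hy : 0 < ∑ j, Real.exp (y j) := by positivity
  have hsum : ∑ j, Real.exp (y j) ≤ Real.exp (dist x y) * ∑ j, Real.exp (x j) :=
    dist_comm x y ▸ sum_exp_le_exp_dist_mul y x
  unfold softmax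
  rw [← mul_div_assoc, div_le_div_iff₀ hx hy]
  calc Real.exp (x i) * ∑ j, Real.exp (y j)
      ≤ (Real.exp (dist x y) * Real.exp (y i)) * (Real.exp (dist x y) * ∑ j, Real.exp (x j)) := by
        gcongr
        exact exp_apply_le_exp_dist_mul x y i
    _ = Real.exp (2 * dist x y) * Real.exp (y i) * ∑ j, Real.exp (x j) := by
        rw [two_mul, Real.exp_add]
        ring

lemma lipschitzWith_softmax_apply (i : ι) : LipschitzWith 2 fun x : ι → ℝ ↦ softmax x i := by
  refine LipschitzWith.of_le_add_mul 2 fun x y ↦ ?_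
  have hexp : 1 - 2 * dist x y ≤ Real.exp (-(2 * dist x y)) := Real.one_sub_le_exp_neg _
  have hratio : Real.exp (-(2 * dist x y)) * softmax x i ≤ softmax y i := by
    rw [Real.exp_neg, inv_mul_le_iff₀ (Real.exp_pos _)]
    exact softmax_le_exp_two_mul_dist_mul x y i
  calc softmax x i = (1 - 2 * dist x y) * softmax x i + 2 * dist x y * softmax x i := by ring
    _ ≤ Real.exp (-(2 * dist x y)) * softmax x i + 2 * dist x y * 1 := by
        gcongr
        · exact softmax_nonneg x i
        · exact softmax_le_one x i
    _ ≤ softmax y i + 2 * dist x y := by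
        rw [mul_one]
        gcongr

end Softmax

section InnerProduct

variable {ι E : Type*} [Fintype ι] [SeminormedAddCommGroup E] [InnerProductSpace ℝ E]
  {φ : ι → E} {r : ℝ}

lemma dist_mul_inner_le [Nonempty ι] (hφ : ∀ i, ‖φ i‖ ≤ r) (σ : ℝ) (θ₁ θ₂ : E) :
    dist (fun i ↦ σ * ⟪θ₁, φ i⟫) (fun i ↦ σ * ⟪θ₂, φ i⟫) ≤ |σ| * (‖θ₁ - θ₂‖ * r) := by
  refine dist_pi_le_iff'.2 fun i ↦ ?_
  calc dist (σ * ⟪θ₁, φ i⟫) (σ * ⟪θ₂, φ i⟫) = |σ| * |⟪θ₁ - θ₂, φ i⟫| := by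
        rw [Real.dist_eq, ← mul_sub, ← inner_sub_left, abs_mul]
    _ ≤ |σ| * (‖θ₁ - θ₂‖ * ‖φ i‖) := by
        gcongr
        exact abs_real_inner_le_norm _ _
    _ ≤ |σ| * (‖θ₁ - θ₂‖ * r) := by
        gcongr
        exact hφ i

theorem softmax_lipschitz_general (hφ : ∀ i, ‖φ i‖ ≤ r) (σ : ℝ) (θ₁ θ₂ : E) (i : ι) :
    |softmax (fun j ↦ σ * ⟪θ₁, φ j⟫) i - softmax (fun j ↦ σ * ⟪θ₂, φ j⟫) i| ≤
      2 * |σ| * r * ‖θ₁ - θ₂‖ := by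
  have : Nonempty ι := ⟨i⟩
  calc |softmax (fun j ↦ σ * ⟪θ₁, φ j⟫) i - softmax (fun j ↦ σ * ⟪θ₂, φ j⟫) i|
      ≤ 2 * dist (fun j ↦ σ * ⟪θ₁, φ j⟫) (fun j ↦ σ * ⟪θ₂, φ j⟫) :=
        (lipschitzWith_softmax_apply i).dist_le_mul _ _
    _ ≤ 2 * (|σ| * (‖θ₁ - θ₂‖ * r)) := by
        gcongr
        exact dist_mul_inner_le hφ σ θ₁ θ₂
    _ = 2 * |σ| * r * ‖θ₁ - θ₂‖ := by ring

end InnerProduct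

/-- The softmax policy is `2σ`-Lipschitz in the parameter `θ`:
for all `θ₁, θ₂` and every action `a`,
`|π_{θ₁}(a) − π_{θ₂}(a)| ≤ 2σ‖θ₁ − θ₂‖`. -/
theorem softmax_lipschitz (N : ℕ) {A : Type*} [Fintype A] [Nonempty A]
    (φ : A → EuclideanSpace ℝ (Fin N)) (hφ : ∀ a, ‖φ a‖ ≤ 1)
    (σ : ℝ) (hσ : 0 < σ)
    (pol : EuclideanSpace ℝ (Fin N) → A → ℝ)
    (hpol : ∀ θ a, pol θ a =
      Real.exp (σ * ⟪θ, φ a⟫) / ∑ a' : A, Real.exp (σ * ⟪θ, φ a'⟫))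
    (θ₁ θ₂ : EuclideanSpace ℝ (Fin N)) (a : A) :
    |pol θ₁ a - pol θ₂ a| ≤ 2 * σ * ‖θ₁ - θ₂‖ := by
  simpa only [hpol, softmax, abs_of_pos hσ, mul_one] using
    softmax_lipschitz_general hφ σ θ₁ θ₂ a
end

section
/- For every θ ∈ ℝ^N and every a ∈ A, the map θ ↦ π_θ(a) is twice differentiable and its second derivative (Hessian), viewed as a linear operator on ℝ^N, has operator norm at most 8σ²: ‖∇²π_θ(a)‖ ≤ 8σ². -/
open scoped RealInnerProductSpace BigOperators

/-!
Since `log π_θ(a) = ⟪θ, φ a⟫ - log ∑ b, exp ⟪θ, φ b⟫` and the gradient of the log-partition function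
is the mean feature `m(θ)`, the gradient of `π_θ(a)` is `π_θ(a) • w_a` with `w_a = φ a - m(θ)`.
The derivative of `m` is the feature covariance `C = ∑ b, π_θ(b) w_b ⊗ w_b`, so the Hessian is
`π_θ(a) (w_a ⊗ w_a - C)`. Features of norm at most `R` give `‖w_b‖ ≤ 2R`, and each of the two
operators in the bracket has norm at most `(2R)² = 4R²`.
-/

section

open InnerProductSpace

variable {E : Type*} [NormedAddCommGroup E] [InnerProductSpace ℝ E] {A : Type*} [Fintype A]

lemma hasFDerivAt_inner_left (x θ : E) :
    HasFDerivAt (fun η : E => ⟪η, x⟫) (innerSL ℝ x) θ := by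
  simp only [real_inner_comm x]
  exact (innerSL ℝ x).hasFDerivAt

/-- The softmax policy with features `φ` and parameter `θ`. The inverse temperature `σ` is absorbed
into the features: `π_θ` for `(σ, φ)` is `softmaxPolicy (σ • φ) θ`. -/
noncomputable def softmaxPolicy (φ : A → E) (θ : E) (a : A) : ℝ :=
  Real.exp ⟪θ, φ a⟫ / ∑ b, Real.exp ⟪θ, φ b⟫

lemma softmaxPolicy_smul_apply (σ : ℝ) (φ : A → E) (θ : E) (a : A) :
    softmaxPolicy (σ • φ) θ a =
      Real.exp (σ * ⟪θ, φ a⟫) / ∑ b, Real.exp (σ * ⟪θ, φ b⟫) := by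
  simp only [softmaxPolicy, Pi.smul_apply, real_inner_smul_right]

namespace softmaxPolicy

/-- The expected feature vector of an action drawn from the softmax policy. -/
noncomputable def meanFeature (φ : A → E) (θ : E) : E :=
  ∑ b, softmaxPolicy φ θ b • φ b

/-- The score `∇_θ log π_θ(a)` of the softmax policy, which is the centred feature of `a`. -/
noncomputable def score (φ : A → E) (θ : E) (a : A) : E :=
  φ a - meanFeature φ θ

/-- The covariance operator of the feature vector of an action drawn from the softmax policy. -/
noncomputable def featureCovariance (φ : A → E) (θ : E) : E →L[ℝ] E :=
  ∑ b, softmaxPolicy φ θ b • rankOne ℝ (score φ θ b) (score φ θ b)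

variable (φ : A → E) (θ : E)

lemma sum_exp_inner_pos [Nonempty A] : 0 < ∑ b, Real.exp ⟪θ, φ b⟫ :=
  Finset.sum_pos (fun _ _ => Real.exp_pos _) Finset.univ_nonempty

lemma nonneg (a : A) : 0 ≤ softmaxPolicy φ θ a := by
  unfold softmaxPolicy
  positivity

lemma sum_eq_one [Nonempty A] : ∑ a, softmaxPolicy φ θ a = 1 := by
  simp only [softmaxPolicy, ← Finset.sum_div, div_self (sum_exp_inner_pos φ θ).ne']

lemma le_one (a : A) : softmaxPolicy φ θ a ≤ 1 :=
  have : Nonempty A := ⟨a⟩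
  sum_eq_one φ θ ▸ Finset.single_le_sum (fun b _ => nonneg φ θ b) (Finset.mem_univ a)

lemma sum_smul_score [Nonempty A] : ∑ b, softmaxPolicy φ θ b • score φ θ b = 0 := by
  simp only [score, smul_sub, Finset.sum_sub_distrib, ← Finset.sum_smul, sum_eq_one, one_smul,
    meanFeature, sub_self]

lemma featureCovariance_eq_sum_rankOne [Nonempty A] :
    featureCovariance φ θ =
      ∑ b, softmaxPolicy φ θ b • rankOne ℝ (φ b) (score φ θ b) := by
  have mean_term : ∑ b, softmaxPolicy φ θ b •
      rankOne ℝ (meanFeature φ θ) (score φ θ b) = 0 := by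
    simp only [← map_smul, ← map_sum, sum_smul_score, map_zero]
  have split_left (b : A) (v : E) : rankOne ℝ (score φ θ b) v =
      rankOne ℝ (φ b) v - rankOne ℝ (meanFeature φ θ) v := by
    rw [score, map_sub, sub_apply]
  simp only [featureCovariance, split_left, smul_sub, Finset.sum_sub_distrib, mean_term, sub_zero]

section Bounds

variable {φ} {R : ℝ}

lemma norm_sum_smul_le [Nonempty A] {F : Type*} [NormedAddCommGroup F] [NormedSpace ℝ F]
    {x : A → F} {C : ℝ} (hx : ∀ b, ‖x b‖ ≤ C) : ‖∑ b, softmaxPolicy φ θ b • x b‖ ≤ C := by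
  rw [← mem_closedBall_zero_iff]
  exact (convex_closedBall 0 C).sum_mem (fun b _ => nonneg φ θ b) (sum_eq_one φ θ)
    fun b _ => mem_closedBall_zero_iff.2 (hx b)

lemma norm_score_le (hφ : ∀ b, ‖φ b‖ ≤ R) (a : A) : ‖score φ θ a‖ ≤ 2 * R := by
  have : Nonempty A := ⟨a⟩
  rw [two_mul]
  exact norm_sub_le_of_le (hφ a) (norm_sum_smul_le θ hφ)

lemma norm_rankOne_score_le (hφ : ∀ b, ‖φ b‖ ≤ R) (a : A) :
    ‖rankOne ℝ (score φ θ a) (score φ θ a)‖ ≤ 4 * R ^ 2 := by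
  rw [norm_rankOne]
  calc ‖score φ θ a‖ * ‖score φ θ a‖ ≤ (2 * R) * (2 * R) :=
        mul_self_le_mul_self (norm_nonneg _) (norm_score_le θ hφ a)
    _ = 4 * R ^ 2 := by ring

lemma norm_featureCovariance_le [Nonempty A] (hφ : ∀ b, ‖φ b‖ ≤ R) :
    ‖featureCovariance φ θ‖ ≤ 4 * R ^ 2 :=
  norm_sum_smul_le θ (norm_rankOne_score_le θ hφ)

end Bounds

lemma eq_exp_sub_log (a : A) :
    softmaxPolicy φ θ a = Real.exp (⟪θ, φ a⟫ - Real.log (∑ b, Real.exp ⟪θ, φ b⟫)) := by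
  have : Nonempty A := ⟨a⟩
  rw [Real.exp_sub, Real.exp_log (sum_exp_inner_pos φ θ), softmaxPolicy]

lemma hasFDerivAt_log_sum_exp_inner [Nonempty A] :
    HasFDerivAt (fun η => Real.log (∑ b, Real.exp ⟪η, φ b⟫)) (innerSL ℝ (meanFeature φ θ)) θ := by
  have hZ : HasFDerivAt (fun η => ∑ b, Real.exp ⟪η, φ b⟫)
      (∑ b, Real.exp ⟪θ, φ b⟫ • innerSL ℝ (φ b)) θ :=
    HasFDerivAt.fun_sum fun b _ => (hasFDerivAt_inner_left (φ b) θ).exp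
  refine (hZ.log (sum_exp_inner_pos φ θ).ne').congr_fderiv ?_
  simp only [meanFeature, softmaxPolicy, map_sum, map_smul, Finset.smul_sum, smul_smul,
    div_eq_inv_mul]

lemma hasFDerivAt (a : A) :
    HasFDerivAt (fun η => softmaxPolicy φ η a)
      (softmaxPolicy φ θ a • innerSL ℝ (score φ θ a)) θ := by
  have : Nonempty A := ⟨a⟩
  simp only [eq_exp_sub_log, score, map_sub]
  exact ((hasFDerivAt_inner_left (φ a) θ).sub (hasFDerivAt_log_sum_exp_inner φ θ)).exp

lemma hasFDerivAt_meanFeature [Nonempty A] :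
    HasFDerivAt (meanFeature φ) (featureCovariance φ θ) θ := by
  rw [featureCovariance_eq_sum_rankOne]
  refine (HasFDerivAt.fun_sum fun b _ => (hasFDerivAt φ θ b).smul_const (φ b)).congr_fderiv ?_
  refine Finset.sum_congr rfl fun b _ => ?_
  ext v
  simp only [ContinuousLinearMap.smulRight_apply, smul_apply, coe_innerSL_apply, smul_eq_mul,
    rankOne_apply, smul_smul]

lemma gradient_eq_smul_score [CompleteSpace E] (a : A) :
    gradient (fun η => softmaxPolicy φ η a) =
      fun θ => softmaxPolicy φ θ a • score φ θ a := by
  refine gradient_eq fun θ => hasGradientAt_iff_hasFDerivAt.2 ?_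
  rw [map_smul]
  exact hasFDerivAt φ θ a

lemma hasFDerivAt_gradient [CompleteSpace E] (a : A) :
    HasFDerivAt (gradient fun η => softmaxPolicy φ η a)
      (softmaxPolicy φ θ a • (rankOne ℝ (score φ θ a) (score φ θ a) -
        featureCovariance φ θ)) θ := by
  have : Nonempty A := ⟨a⟩
  rw [gradient_eq_smul_score]
  have hscore : HasFDerivAt (fun η => score φ η a) (-featureCovariance φ θ) θ :=
    (hasFDerivAt_meanFeature φ θ).const_sub (φ a)
  refine ((hasFDerivAt φ θ a).smul hscore).congr_fderiv ?_
  ext v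
  simp only [smul_apply, sub_apply, ContinuousLinearMap.smulRight_apply,
    coe_innerSL_apply, smul_eq_mul, rankOne_apply, smul_sub, smul_neg, smul_smul, neg_add_eq_sub]

end softmaxPolicy

open softmaxPolicy in
theorem softmax_hessian_bound_general [CompleteSpace E] (φ : A → E) {R : ℝ}
    (hφ : ∀ a, ‖φ a‖ ≤ R) (θ : E) (a : A) :
    DifferentiableAt ℝ (fun η => softmaxPolicy φ η a) θ ∧
      DifferentiableAt ℝ (gradient fun η => softmaxPolicy φ η a) θ ∧
      ‖fderiv ℝ (gradient fun η => softmaxPolicy φ η a) θ‖ ≤ 8 * R ^ 2 := by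
  have : Nonempty A := ⟨a⟩
  have hessian := hasFDerivAt_gradient φ θ a
  refine ⟨(hasFDerivAt φ θ a).differentiableAt, hessian.differentiableAt, ?_⟩
  rw [hessian.fderiv, norm_smul, Real.norm_of_nonneg (nonneg φ θ a)]
  refine (mul_le_of_le_one_left (norm_nonneg _) (le_one φ θ a)).trans ?_
  linarith [norm_sub_le_of_le (norm_rankOne_score_le θ hφ a) (norm_featureCovariance_le θ hφ)]

end

/-- The softmax policy `θ ↦ π_θ(a)` is twice differentiable and its Hessian,
viewed as a linear operator on `ℝ^N`, has operator norm at most `8σ²`. -/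
theorem softmax_hessian_bound (N : ℕ) {A : Type*} [Fintype A] [Nonempty A]
    (φ : A → EuclideanSpace ℝ (Fin N)) (hφ : ∀ a, ‖φ a‖ ≤ 1)
    (σ : ℝ) (hσ : 0 < σ)
    (pol : EuclideanSpace ℝ (Fin N) → A → ℝ)
    (hpol : ∀ θ a, pol θ a =
      Real.exp (σ * ⟪θ, φ a⟫) / ∑ a' : A, Real.exp (σ * ⟪θ, φ a'⟫))
    (θ : EuclideanSpace ℝ (Fin N)) (a : A) :
    DifferentiableAt ℝ (fun θ' => pol θ' a) θ ∧
      DifferentiableAt ℝ (fun θ' => gradient (fun θ'' => pol θ'' a) θ') θ ∧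
      ‖fderiv ℝ (fun θ' => gradient (fun θ'' => pol θ'' a) θ') θ‖ ≤ 8 * σ ^ 2 := by
  obtain rfl : pol = softmaxPolicy (σ • φ) :=
    funext₂ fun η b => (hpol η b).trans (softmaxPolicy_smul_apply σ φ η b).symm
  refine softmax_hessian_bound_general (σ • φ) (fun b => ?_) θ a
  simpa [norm_smul, abs_of_pos hσ] using mul_le_of_le_one_right hσ.le (hφ b)
end

section
/- For every θ₁, θ₂ ∈ ℝ^N and every a ∈ A, the gradients of the softmax policy satisfy ‖∇π_{θ₁}(a) − ∇π_{θ₂}(a)‖ ≤ 8σ²‖θ₁ − θ₂‖, i.e., the softmax policy is 8σ²-smooth. -/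
open scoped RealInnerProductSpace BigOperators

/-!
The softmax weights `p_a(θ)` with linear logits `ℓ_a` have derivative `p_a (ℓ_a - m)`, where `m` is
the softmax mean of the logits, so the derivative of the softmax mean of any family `f` is the
covariance of `ℓ` and `f`. If `‖ℓ_a‖ ≤ R` and `‖f_a‖ ≤ C`, this covariance has norm at most `2RC`,
so the mean of `f` is `2RC`-Lipschitz. Taking indicators and the logits themselves for `f`, we see
that `p_a` is `2R`-Lipschitz and `m` is `2R²`-Lipschitz; as `0 ≤ p_a ≤ 1` and `‖ℓ_a - m‖ ≤ 2R`, the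
product `p_a (ℓ_a - m)` is Lipschitz with constant `2R · 2R + 1 · 2R² = 6R²`.
-/

section SoftmaxMean

variable {A E F : Type*} [Fintype A]
  [NormedAddCommGroup E] [NormedSpace ℝ E] [NormedAddCommGroup F] [NormedSpace ℝ F]
  {ℓ : A → StrongDual ℝ E} {f : A → F} {R C : ℝ}

/-- The softmax probability of `a` at the parameter `θ`, for the logits `b ↦ ℓ b θ`. Feature
vectors `φ b` and an inverse temperature `σ` correspond to `ℓ b = σ • ⟪φ b, ·⟫`. -/
noncomputable def softmaxWeight (ℓ : A → StrongDual ℝ E) (a : A) (θ : E) : ℝ :=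
  Real.exp (ℓ a θ) / ∑ b, Real.exp (ℓ b θ)

/-- The expectation of `f` under the softmax distribution at `θ`. -/
noncomputable def softmaxMean (ℓ : A → StrongDual ℝ E) (f : A → F) (θ : E) : F :=
  ∑ a, softmaxWeight ℓ a θ • f a

lemma softmaxWeight_nonneg (ℓ : A → StrongDual ℝ E) (a : A) (θ : E) : 0 ≤ softmaxWeight ℓ a θ := by
  unfold softmaxWeight
  positivity

lemma sum_softmaxWeight [Nonempty A] (ℓ : A → StrongDual ℝ E) (θ : E) :
    ∑ a, softmaxWeight ℓ a θ = 1 := by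
  simp only [softmaxWeight, ← Finset.sum_div]
  exact div_self (by positivity)

lemma softmaxWeight_le_one (ℓ : A → StrongDual ℝ E) (a : A) (θ : E) : softmaxWeight ℓ a θ ≤ 1 :=
  have : Nonempty A := ⟨a⟩
  sum_softmaxWeight ℓ θ ▸ Finset.single_le_sum (f := (softmaxWeight ℓ · θ))
    (fun b _ ↦ softmaxWeight_nonneg ℓ b θ) (Finset.mem_univ a)

lemma softmaxMean_single [DecidableEq A] (ℓ : A → StrongDual ℝ E) (a : A) :
    softmaxMean ℓ (Pi.single a (1 : ℝ)) = softmaxWeight ℓ a := by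
  ext θ
  simp [softmaxMean, Pi.single_apply]

lemma norm_softmaxMean_le [Nonempty A] (ℓ : A → StrongDual ℝ E) (hf : ∀ a, ‖f a‖ ≤ C) (θ : E) :
    ‖softmaxMean ℓ f θ‖ ≤ C :=
  mem_closedBall_zero_iff.mp <| (convex_closedBall 0 C).sum_mem
    (fun a _ ↦ softmaxWeight_nonneg ℓ a θ) (sum_softmaxWeight ℓ θ)
    fun a _ ↦ mem_closedBall_zero_iff.mpr (hf a)

lemma norm_sub_softmaxMean_le (ℓ : A → StrongDual ℝ E) (hf : ∀ a, ‖f a‖ ≤ C) (a : A) (θ : E) :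
    ‖f a - softmaxMean ℓ f θ‖ ≤ 2 * C :=
  have : Nonempty A := ⟨a⟩
  (norm_sub_le_of_le (hf a) (norm_softmaxMean_le ℓ hf θ)).trans_eq (two_mul C).symm

lemma hasFDerivAt_softmaxWeight (ℓ : A → StrongDual ℝ E) (a : A) (θ : E) :
    HasFDerivAt (softmaxWeight ℓ a) (softmaxWeight ℓ a θ • (ℓ a - softmaxMean ℓ ℓ θ)) θ := by
  have : Nonempty A := ⟨a⟩
  have hexp (b : A) : HasFDerivAt (fun η ↦ Real.exp (ℓ b η)) (Real.exp (ℓ b θ) • ℓ b) θ :=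
    (ℓ b).hasFDerivAt.exp
  have hsum : HasFDerivAt (fun η ↦ ∑ b, Real.exp (ℓ b η)) (∑ b, Real.exp (ℓ b θ) • ℓ b) θ :=
    .fun_sum fun b _ ↦ hexp b
  have hpos : ∑ b, Real.exp (ℓ b θ) ≠ 0 := by positivity
  have hmean : softmaxMean ℓ ℓ θ =
      (∑ b, Real.exp (ℓ b θ))⁻¹ • ∑ b, Real.exp (ℓ b θ) • ℓ b := by
    simp only [softmaxMean, softmaxWeight, Finset.smul_sum, smul_smul, div_eq_inv_mul]
  refine ((hexp a).fun_mul ((hasDerivAt_inv hpos).comp_hasFDerivAt θ hsum)).congr_fderiv ?_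
  rw [hmean, softmaxWeight]
  simp only [Function.comp_apply]
  module

lemma hasFDerivAt_softmaxMean (ℓ : A → StrongDual ℝ E) (f : A → F) (θ : E) :
    HasFDerivAt (softmaxMean ℓ f)
      (softmaxMean ℓ (fun a ↦ (ℓ a - softmaxMean ℓ ℓ θ).smulRight (f a)) θ) θ := by
  refine (HasFDerivAt.fun_sum fun a _ ↦
    (hasFDerivAt_softmaxWeight ℓ a θ).smul_const (f a)).congr_fderiv ?_
  ext v
  simp [softmaxMean, smul_smul]

lemma norm_softmaxMean_sub_le [Nonempty A] (hℓ : ∀ a, ‖ℓ a‖ ≤ R) (hf : ∀ a, ‖f a‖ ≤ C) (x y : E) :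
    ‖softmaxMean ℓ f x - softmaxMean ℓ f y‖ ≤ 2 * R * C * ‖x - y‖ := by
  refine convex_univ.norm_image_sub_le_of_norm_hasFDerivWithin_le
    (fun θ _ ↦ (hasFDerivAt_softmaxMean ℓ f θ).hasFDerivWithinAt)
    (fun θ _ ↦ norm_softmaxMean_le ℓ (fun a ↦ ?_) θ) (Set.mem_univ y) (Set.mem_univ x)
  rw [ContinuousLinearMap.norm_smulRight_apply]
  have hdev := norm_sub_softmaxMean_le ℓ hℓ a θ
  exact mul_le_mul hdev (hf a) (norm_nonneg _) ((norm_nonneg _).trans hdev)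

lemma abs_softmaxWeight_sub_le (hℓ : ∀ a, ‖ℓ a‖ ≤ R) (a : A) (x y : E) :
    |softmaxWeight ℓ a x - softmaxWeight ℓ a y| ≤ 2 * R * ‖x - y‖ := by
  classical
  have : Nonempty A := ⟨a⟩
  have hsingle (b : A) : ‖(Pi.single a 1 : A → ℝ) b‖ ≤ 1 := by
    rw [Pi.single_apply]
    split_ifs <;> simp
  simpa [softmaxMean_single] using norm_softmaxMean_sub_le hℓ hsingle x y

theorem norm_fderiv_softmaxWeight_sub_le (hℓ : ∀ a, ‖ℓ a‖ ≤ R) (a : A) (x y : E) :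
    ‖fderiv ℝ (softmaxWeight ℓ a) x - fderiv ℝ (softmaxWeight ℓ a) y‖ ≤
      6 * R ^ 2 * ‖x - y‖ := by
  have : Nonempty A := ⟨a⟩
  have hR : 0 ≤ R := (norm_nonneg _).trans (hℓ a)
  set p := softmaxWeight ℓ a
  set m := softmaxMean ℓ ℓ
  have hweight : ‖(p x - p y) • (ℓ a - m x)‖ ≤ 2 * R * ‖x - y‖ * (2 * R) := by
    rw [norm_smul]
    gcongr
    exacts [abs_softmaxWeight_sub_le hℓ a x y, norm_sub_softmaxMean_le ℓ hℓ a x]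
  have hmean : ‖p y • (m x - m y)‖ ≤ 1 * (2 * R * R * ‖x - y‖) := by
    rw [norm_smul, Real.norm_of_nonneg (softmaxWeight_nonneg ℓ a y)]
    gcongr
    exacts [softmaxWeight_le_one ℓ a y, norm_softmaxMean_sub_le hℓ hℓ x y]
  calc ‖fderiv ℝ p x - fderiv ℝ p y‖
      = ‖p x • (ℓ a - m x) - p y • (ℓ a - m y)‖ := by
        rw [(hasFDerivAt_softmaxWeight ℓ a x).fderiv, (hasFDerivAt_softmaxWeight ℓ a y).fderiv]
    _ = ‖(p x - p y) • (ℓ a - m x) - p y • (m x - m y)‖ := by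
        congr 1
        module
    _ ≤ 2 * R * ‖x - y‖ * (2 * R) + 1 * (2 * R * R * ‖x - y‖) := norm_sub_le_of_le hweight hmean
    _ = 6 * R ^ 2 * ‖x - y‖ := by ring

end SoftmaxMean

lemma norm_gradient_sub_gradient {𝕜 E : Type*} [RCLike 𝕜] [NormedAddCommGroup E]
    [InnerProductSpace 𝕜 E] [CompleteSpace E] (f g : E → 𝕜) (x y : E) :
    ‖gradient f x - gradient g y‖ = ‖fderiv 𝕜 f x - fderiv 𝕜 g y‖ := by
  rw [← toDual_gradient, ← toDual_gradient, ← map_sub, LinearIsometryEquiv.norm_map]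

theorem softmax_smooth_general {E A : Type*} [NormedAddCommGroup E] [InnerProductSpace ℝ E]
    [CompleteSpace E] [Fintype A] (φ : A → E) {R : ℝ} (hφ : ∀ a, ‖φ a‖ ≤ R) (σ : ℝ)
    (pol : E → A → ℝ)
    (hpol : ∀ θ a, pol θ a =
      Real.exp (σ * ⟪θ, φ a⟫) / ∑ a' : A, Real.exp (σ * ⟪θ, φ a'⟫))
    (θ₁ θ₂ : E) (a : A) :
    ‖gradient (fun θ' => pol θ' a) θ₁ - gradient (fun θ' => pol θ' a) θ₂‖ ≤
      6 * (σ * R) ^ 2 * ‖θ₁ - θ₂‖ := by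
  have hweight : (fun θ' => pol θ' a) = softmaxWeight (fun b ↦ σ • innerSL ℝ (φ b)) a := by
    ext θ
    simp [hpol, softmaxWeight, real_inner_comm]
  have hlogit (b : A) : ‖σ • innerSL ℝ (φ b)‖ ≤ |σ| * R := by
    rw [norm_smul, innerSL_apply_norm, Real.norm_eq_abs]
    gcongr
    exact hφ b
  rw [norm_gradient_sub_gradient, hweight]
  simpa only [mul_pow, sq_abs] using norm_fderiv_softmaxWeight_sub_le hlogit a θ₁ θ₂

/-- The softmax policy is `8σ²`-smooth: for all `θ₁, θ₂` and every action `a`,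
`‖∇π_{θ₁}(a) − ∇π_{θ₂}(a)‖ ≤ 8σ²‖θ₁ − θ₂‖`. -/
theorem softmax_smooth (N : ℕ) {A : Type*} [Fintype A] [Nonempty A]
    (φ : A → EuclideanSpace ℝ (Fin N)) (hφ : ∀ a, ‖φ a‖ ≤ 1)
    (σ : ℝ) (hσ : 0 < σ)
    (pol : EuclideanSpace ℝ (Fin N) → A → ℝ)
    (hpol : ∀ θ a, pol θ a =
      Real.exp (σ * ⟪θ, φ a⟫) / ∑ a' : A, Real.exp (σ * ⟪θ, φ a'⟫))
    (θ₁ θ₂ : EuclideanSpace ℝ (Fin N)) (a : A) :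
    ‖gradient (fun θ' => pol θ' a) θ₁ - gradient (fun θ' => pol θ' a) θ₂‖ ≤
      8 * σ ^ 2 * ‖θ₁ - θ₂‖ := by
  exact (softmax_smooth_general φ hφ σ pol hpol θ₁ θ₂ a).trans <| by
    rw [mul_one]; gcongr; norm_num
end

section
/- For all θ₁, θ₂ ∈ ℝ^N with ‖θ₁‖ ≤ R and ‖θ₂‖ ≤ R, the temporal-difference error satisfies |δ(θ₁) − δ(θ₂)| ≤ (1 + γ + γ R |A| k₁)‖θ₁ − θ₂‖, where |A| is the cardinality of A. -/
open scoped RealInnerProductSpace BigOperators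

/-!
Only the expected next value `∑ a, π_θ(a) ⟪θ, φ'_a⟫` is nonlinear in `θ`. Adding and subtracting
`∑ a, π_θ₁(a) ⟪θ₂, φ'_a⟫` separates the change in the values, an average of numbers of size at most
`‖θ₁ - θ₂‖`, from the change in the weights, `|A|` terms of size at most `k₁ ‖θ₁ - θ₂‖ R`.
-/

section WeightedSums

variable {ι E : Type*} [SeminormedAddCommGroup E] {s : Finset ι}

theorem norm_sum_smul_le_of_sum_eq_one [NormedSpace ℝ E] {p : ι → ℝ} {x : ι → E} {C : ℝ}
    (hp : ∀ i ∈ s, 0 ≤ p i) (hp_sum : ∑ i ∈ s, p i = 1) (hx : ∀ i ∈ s, ‖x i‖ ≤ C) :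
    ‖∑ i ∈ s, p i • x i‖ ≤ C := by
  simp only [← mem_closedBall_zero_iff] at hx ⊢
  exact (convex_closedBall 0 C).sum_mem hp hp_sum hx

theorem norm_sum_smul_le_card_mul {𝕜 : Type*} [SeminormedRing 𝕜] [Module 𝕜 E] [IsBoundedSMul 𝕜 E]
    {c : ι → 𝕜} {x : ι → E} {ε C : ℝ} (hc : ∀ i ∈ s, ‖c i‖ ≤ ε) (hx : ∀ i ∈ s, ‖x i‖ ≤ C) :
    ‖∑ i ∈ s, c i • x i‖ ≤ s.card * (ε * C) := by
  have norm_smul_le_mul (i : ι) (hi : i ∈ s) : ‖c i • x i‖ ≤ ε * C :=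
    (norm_smul_le _ _).trans <|
      mul_le_mul (hc i hi) (hx i hi) (norm_nonneg _) ((norm_nonneg _).trans (hc i hi))
  simpa using norm_sum_le_of_le s norm_smul_le_mul

theorem norm_sum_smul_sub_sum_smul_le [NormedSpace ℝ E] {p q : ι → ℝ} {x y : ι → E} {d ε C : ℝ}
    (hp : ∀ i ∈ s, 0 ≤ p i) (hp_sum : ∑ i ∈ s, p i = 1) (hxy : ∀ i ∈ s, ‖x i - y i‖ ≤ d)
    (hpq : ∀ i ∈ s, ‖p i - q i‖ ≤ ε) (hy : ∀ i ∈ s, ‖y i‖ ≤ C) :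
    ‖∑ i ∈ s, p i • x i - ∑ i ∈ s, q i • y i‖ ≤ d + s.card * (ε * C) := by
  have split : ∑ i ∈ s, p i • x i - ∑ i ∈ s, q i • y i
      = ∑ i ∈ s, p i • (x i - y i) + ∑ i ∈ s, (p i - q i) • y i := by
    simp only [smul_sub, sub_smul, Finset.sum_sub_distrib, sub_add_sub_cancel]
  rw [split]
  exact norm_add_le_of_le (norm_sum_smul_le_of_sum_eq_one hp hp_sum hxy)
    (norm_sum_smul_le_card_mul hpq hy)

end WeightedSums

section InnerProduct

theorem norm_inner_le_of_norm_le_one {𝕜 E : Type*} [RCLike 𝕜] [SeminormedAddCommGroup E]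
    [InnerProductSpace 𝕜 E] (x : E) {y : E} (hy : ‖y‖ ≤ 1) : ‖inner 𝕜 x y‖ ≤ ‖x‖ :=
  (norm_inner_le_norm x y).trans (mul_le_of_le_one_right (norm_nonneg x) hy)

variable {E A : Type*} [SeminormedAddCommGroup E] [InnerProductSpace ℝ E] [Fintype A]

theorem abs_sum_mul_inner_sub_sum_mul_inner_le {φ' : A → E} (hφ' : ∀ a, ‖φ' a‖ ≤ 1)
    {p q : A → ℝ} (hp : ∀ a, 0 ≤ p a) (hp_sum : ∑ a, p a = 1) {ε : ℝ}
    (hpq : ∀ a, |p a - q a| ≤ ε) {R : ℝ} (x : E) {y : E} (hy : ‖y‖ ≤ R) :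
    |∑ a, p a * ⟪x, φ' a⟫ - ∑ a, q a * ⟪y, φ' a⟫| ≤ ‖x - y‖ + Fintype.card A * (ε * R) := by
  have inner_sub_le (a : A) : ‖⟪x, φ' a⟫ - ⟪y, φ' a⟫‖ ≤ ‖x - y‖ := by
    rw [← inner_sub_left]
    exact norm_inner_le_of_norm_le_one _ (hφ' a)
  have inner_le (a : A) : ‖⟪y, φ' a⟫‖ ≤ R := (norm_inner_le_of_norm_le_one y (hφ' a)).trans hy
  exact norm_sum_smul_sub_sum_smul_le (fun a _ => hp a) hp_sum (fun a _ => inner_sub_le a)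
    (fun a _ => hpq a) (fun a _ => inner_le a)

theorem td_error_lipschitz_general {φ : E} (hφ : ‖φ‖ ≤ 1) {φ' : A → E} (hφ' : ∀ a, ‖φ' a‖ ≤ 1)
    {γ : ℝ} (hγ : 0 ≤ γ) {r : ℝ} {pol : E → A → ℝ} (hpol_nonneg : ∀ θ a, 0 ≤ pol θ a)
    (hpol_sum : ∀ θ, ∑ a, pol θ a = 1) {k₁ : ℝ}
    (hpol_lip : ∀ θ₁ θ₂ a, |pol θ₁ a - pol θ₂ a| ≤ k₁ * ‖θ₁ - θ₂‖) {δ : E → ℝ}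
    (hδ : ∀ θ, δ θ = r + γ * ∑ a, pol θ a * ⟪θ, φ' a⟫ - ⟪θ, φ⟫) {R : ℝ} (θ₁ : E) {θ₂ : E}
    (hθ₂ : ‖θ₂‖ ≤ R) :
    |δ θ₁ - δ θ₂| ≤ (1 + γ + γ * R * Fintype.card A * k₁) * ‖θ₁ - θ₂‖ := by
  let V (θ : E) : ℝ := ∑ a, pol θ a * ⟪θ, φ' a⟫
  have td_error_eq (θ : E) : δ θ = r + γ * V θ - ⟪θ, φ⟫ := hδ θ
  have next_value_le : |V θ₁ - V θ₂| ≤ ‖θ₁ - θ₂‖ + Fintype.card A * (k₁ * ‖θ₁ - θ₂‖ * R) :=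
    abs_sum_mul_inner_sub_sum_mul_inner_le hφ' (hpol_nonneg θ₁) (hpol_sum θ₁)
      (hpol_lip θ₁ θ₂) θ₁ hθ₂
  have current_value_le : |⟪θ₁ - θ₂, φ⟫| ≤ ‖θ₁ - θ₂‖ :=
    norm_inner_le_of_norm_le_one (𝕜 := ℝ) _ hφ
  calc |δ θ₁ - δ θ₂|
      = |γ * (V θ₁ - V θ₂) - ⟪θ₁ - θ₂, φ⟫| := by
        rw [td_error_eq, td_error_eq, inner_sub_left]
        congr 1
        ring
    _ ≤ γ * |V θ₁ - V θ₂| + |⟪θ₁ - θ₂, φ⟫| := by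
        simpa only [abs_mul, abs_of_nonneg hγ] using
          abs_sub (γ * (V θ₁ - V θ₂)) ⟪θ₁ - θ₂, φ⟫
    _ ≤ γ * (‖θ₁ - θ₂‖ + Fintype.card A * (k₁ * ‖θ₁ - θ₂‖ * R)) + ‖θ₁ - θ₂‖ := by
        gcongr
    _ = (1 + γ + γ * R * Fintype.card A * k₁) * ‖θ₁ - θ₂‖ := by ring

end InnerProduct

/-- Lipschitz continuity of the temporal-difference error: for `‖θ₁‖ ≤ R`, `‖θ₂‖ ≤ R`,
`|δ(θ₁) − δ(θ₂)| ≤ (1 + γ + γR|A|k₁)‖θ₁ − θ₂‖`. -/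
theorem td_error_lipschitz (N : ℕ) {A : Type*} [Fintype A] [Nonempty A]
    (φ : EuclideanSpace ℝ (Fin N)) (hφ : ‖φ‖ ≤ 1)
    (φ' : A → EuclideanSpace ℝ (Fin N)) (hφ' : ∀ a, ‖φ' a‖ ≤ 1)
    (γ : ℝ) (hγ : γ ∈ Set.Ioo (0 : ℝ) 1)
    (r rmax : ℝ) (hr : 0 ≤ r) (hrmax : r ≤ rmax)
    (pol : EuclideanSpace ℝ (Fin N) → A → ℝ)
    (hpol_nonneg : ∀ θ a, 0 ≤ pol θ a)
    (hpol_sum : ∀ θ, ∑ a : A, pol θ a = 1)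
    (k₁ : ℝ)
    (hpol_lip : ∀ θ₁ θ₂ a, |pol θ₁ a - pol θ₂ a| ≤ k₁ * ‖θ₁ - θ₂‖)
    (δ : EuclideanSpace ℝ (Fin N) → ℝ)
    (hδ : ∀ θ, δ θ = r + γ * ∑ a : A, pol θ a * ⟪θ, φ' a⟫ - ⟪θ, φ⟫)
    (R : ℝ) (hR : 0 < R)
    (θ₁ θ₂ : EuclideanSpace ℝ (Fin N)) (hθ₁ : ‖θ₁‖ ≤ R) (hθ₂ : ‖θ₂‖ ≤ R) :
    |δ θ₁ - δ θ₂| ≤ (1 + γ + γ * R * (Fintype.card A) * k₁) * ‖θ₁ - θ₂‖ :=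
  td_error_lipschitz_general hφ hφ' hγ.1.le hpol_nonneg hpol_sum hpol_lip hδ θ₁ hθ₂
end

section
/- For all θ₁, θ₂ ∈ ℝ^N with ‖θ₁‖ ≤ R and ‖θ₂‖ ≤ R, the vectors φ̂(θ) = Σ_{a∈A} ( ⟨θ, φ'_a⟩ ∇π_θ(a) + π_θ(a) φ'_a ) satisfy ‖φ̂(θ₁) − φ̂(θ₂)‖ ≤ |A|(2k₁ + k₂R)‖θ₁ − θ₂‖, where |A| is the cardinality of A. -/
open scoped RealInnerProductSpace BigOperators

/-! Each summand of `φ̂(θ₁) - φ̂(θ₂)` is expanded by the product rule for differences,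
`a • x - b • y = a • (x - y) + (a - b) • y`. Smoothness of `π` bounds the variation of the gradient
and gives `k₂ R`; one `k₁` comes from the variation of the inner product, which is multiplied by a
gradient, and the other from the mean value inequality applied to `π`. -/

theorem norm_smul_sub_smul_le {α F : Type*} [SeminormedRing α] [SeminormedAddCommGroup F]
    [Module α F] [IsBoundedSMul α F] (a b : α) (x y : F) :
    ‖a • x - b • y‖ ≤ ‖a‖ * ‖x - y‖ + ‖a - b‖ * ‖y‖ :=
  calc
    ‖a • x - b • y‖ = ‖a • (x - y) + (a - b) • y‖ := by
      rw [smul_sub, sub_smul, sub_add_sub_cancel]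
    _ ≤ ‖a‖ * ‖x - y‖ + ‖a - b‖ * ‖y‖ :=
      norm_add_le_of_le (norm_smul_le _ _) (norm_smul_le _ _)

theorem norm_inner_smul_sub_inner_smul_le {𝕜 E F : Type*} [RCLike 𝕜]
    [SeminormedAddCommGroup E] [InnerProductSpace 𝕜 E] [SeminormedAddCommGroup F]
    [NormedSpace 𝕜 F] (v x y : E) (u w : F) :
    ‖inner 𝕜 x v • u - inner 𝕜 y v • w‖ ≤ ‖v‖ * (‖x‖ * ‖u - w‖ + ‖x - y‖ * ‖w‖) :=
  calc
    ‖inner 𝕜 x v • u - inner 𝕜 y v • w‖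
        ≤ ‖inner 𝕜 x v‖ * ‖u - w‖ + ‖inner 𝕜 (x - y) v‖ * ‖w‖ := by
      rw [inner_sub_left]
      exact norm_smul_sub_smul_le _ _ _ _
    _ ≤ ‖x‖ * ‖v‖ * ‖u - w‖ + ‖x - y‖ * ‖v‖ * ‖w‖ := by
      gcongr <;> exact norm_inner_le_norm _ _
    _ = ‖v‖ * (‖x‖ * ‖u - w‖ + ‖x - y‖ * ‖w‖) := by ring

theorem norm_image_sub_le_of_norm_hasGradientWithin_le {𝕜 E : Type*} [RCLike 𝕜]
    [NormedAddCommGroup E] [InnerProductSpace 𝕜 E] [CompleteSpace E] [NormedSpace ℝ E]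
    {f : E → 𝕜} {f' : E → E} {s : Set E} {C : ℝ} {x y : E}
    (hf : ∀ z ∈ s, HasGradientWithinAt f (f' z) s z) (bound : ∀ z ∈ s, ‖f' z‖ ≤ C)
    (hs : Convex ℝ s) (hx : x ∈ s) (hy : y ∈ s) : ‖f y - f x‖ ≤ C * ‖y - x‖ :=
  hs.norm_image_sub_le_of_norm_hasFDerivWithin_le (fun z hz => (hf z hz).hasFDerivWithinAt)
    (fun z hz => (LinearIsometryEquiv.norm_map _ _).trans_le (bound z hz)) hx hy

section RealHilbert

variable {E : Type*} [NormedAddCommGroup E] [InnerProductSpace ℝ E] [CompleteSpace E]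
  {s : Set E} {k₁ k₂ B R : ℝ}

theorem norm_inner_smul_gradient_add_smul_sub_le {f : E → ℝ} {f' : E → E} {v x y : E}
    (hf : ∀ z ∈ s, HasGradientWithinAt f (f' z) s z) (hs : Convex ℝ s)
    (hgrad : ∀ z ∈ s, ‖f' z‖ ≤ k₁) (hx : x ∈ s) (hy : y ∈ s)
    (hsmooth : ‖f' x - f' y‖ ≤ k₂ * ‖x - y‖) (hv : ‖v‖ ≤ B) (hxR : ‖x‖ ≤ R) :
    ‖(⟪x, v⟫ • f' x + f x • v) - (⟪y, v⟫ • f' y + f y • v)‖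
      ≤ B * (2 * k₁ + k₂ * R) * ‖x - y‖ := by
  have hk₁ : 0 ≤ k₁ := (norm_nonneg _).trans (hgrad y hy)
  have hB : 0 ≤ B := (norm_nonneg v).trans hv
  have hR : 0 ≤ R := (norm_nonneg x).trans hxR
  have hlip : ‖f x - f y‖ ≤ k₁ * ‖x - y‖ :=
    norm_image_sub_le_of_norm_hasGradientWithin_le hf hgrad hs hy hx
  calc
    ‖(⟪x, v⟫ • f' x + f x • v) - (⟪y, v⟫ • f' y + f y • v)‖
        = ‖(⟪x, v⟫ • f' x - ⟪y, v⟫ • f' y) + (f x - f y) • v‖ := by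
      rw [add_sub_add_comm, sub_smul]
    _ ≤ ‖v‖ * (‖x‖ * ‖f' x - f' y‖ + ‖x - y‖ * ‖f' y‖) + ‖f x - f y‖ * ‖v‖ :=
      norm_add_le_of_le (norm_inner_smul_sub_inner_smul_le _ _ _ _ _) (norm_smul_le _ _)
    _ ≤ B * (R * (k₂ * ‖x - y‖) + ‖x - y‖ * k₁) + k₁ * ‖x - y‖ * B := by
      gcongr
      exact hgrad y hy
    _ = B * (2 * k₁ + k₂ * R) * ‖x - y‖ := by ring

theorem phihat_lipschitz_general {A : Type*} [Fintype A] {φ' : A → E} (hφ' : ∀ a, ‖φ' a‖ ≤ B)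
    {pol : E → A → ℝ} {polGrad : A → E → E} (hs : Convex ℝ s)
    (hpol : ∀ a, ∀ θ ∈ s, HasGradientWithinAt (fun θ' => pol θ' a) (polGrad a θ) s θ)
    (hpol_grad : ∀ a, ∀ θ ∈ s, ‖polGrad a θ‖ ≤ k₁)
    (hpol_smooth : ∀ a, ∀ θ₁ ∈ s, ∀ θ₂ ∈ s,
      ‖polGrad a θ₁ - polGrad a θ₂‖ ≤ k₂ * ‖θ₁ - θ₂‖)
    {phihat : E → E}
    (hphihat : ∀ θ ∈ s, phihat θ = ∑ a, (⟪θ, φ' a⟫ • polGrad a θ + pol θ a • φ' a))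
    {θ₁ θ₂ : E} (hθ₁ : θ₁ ∈ s) (hθ₂ : θ₂ ∈ s) (hR : ‖θ₁‖ ≤ R) :
    ‖phihat θ₁ - phihat θ₂‖ ≤ Fintype.card A * (B * (2 * k₁ + k₂ * R)) * ‖θ₁ - θ₂‖ := by
  rw [hphihat θ₁ hθ₁, hphihat θ₂ hθ₂, ← Finset.sum_sub_distrib]
  calc
    _ ≤ ∑ _a : A, B * (2 * k₁ + k₂ * R) * ‖θ₁ - θ₂‖ :=
      norm_sum_le_of_le _ fun a _ => norm_inner_smul_gradient_add_smul_sub_le (hpol a) hs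
        (hpol_grad a) hθ₁ hθ₂ (hpol_smooth a θ₁ hθ₁ θ₂ hθ₂) (hφ' a) hR
    _ = Fintype.card A * (B * (2 * k₁ + k₂ * R)) * ‖θ₁ - θ₂‖ := by
      rw [Finset.sum_const, nsmul_eq_mul, Finset.card_univ, mul_assoc _ (B * _)]

end RealHilbert

/-- Lipschitz continuity of `φ̂(θ) = Σ_a (⟨θ, φ'_a⟩ ∇π_θ(a) + π_θ(a) φ'_a)`:
for `‖θ₁‖ ≤ R`, `‖θ₂‖ ≤ R`, `‖φ̂(θ₁) − φ̂(θ₂)‖ ≤ |A|(2k₁ + k₂R)‖θ₁ − θ₂‖`. -/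
theorem phihat_lipschitz (N : ℕ) {A : Type*} [Fintype A] [Nonempty A]
    (φ' : A → EuclideanSpace ℝ (Fin N)) (hφ' : ∀ a, ‖φ' a‖ ≤ 1)
    (pol : EuclideanSpace ℝ (Fin N) → A → ℝ)
    (hpol_nonneg : ∀ θ a, 0 ≤ pol θ a)
    (hpol_sum : ∀ θ, ∑ a : A, pol θ a = 1)
    (hpol_diff : ∀ θ a, DifferentiableAt ℝ (fun θ' => pol θ' a) θ)
    (k₁ k₂ : ℝ)
    (hpol_grad : ∀ θ a, ‖gradient (fun θ' => pol θ' a) θ‖ ≤ k₁)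
    (hpol_smooth : ∀ θ₁ θ₂ a,
      ‖gradient (fun θ' => pol θ' a) θ₁ - gradient (fun θ' => pol θ' a) θ₂‖ ≤
        k₂ * ‖θ₁ - θ₂‖)
    (phihat : EuclideanSpace ℝ (Fin N) → EuclideanSpace ℝ (Fin N))
    (hphihat : ∀ θ, phihat θ = ∑ a : A,
      (⟪θ, φ' a⟫ • gradient (fun θ' => pol θ' a) θ + pol θ a • φ' a))
    (R : ℝ) (hR : 0 < R)
    (θ₁ θ₂ : EuclideanSpace ℝ (Fin N)) (hθ₁ : ‖θ₁‖ ≤ R) (hθ₂ : ‖θ₂‖ ≤ R) :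
    ‖phihat θ₁ - phihat θ₂‖ ≤ (Fintype.card A) * (2 * k₁ + k₂ * R) * ‖θ₁ - θ₂‖ := by
  simpa only [one_mul] using phihat_lipschitz_general hφ' convex_univ
    (fun a θ _ => hasGradientWithinAt_univ.mpr (hpol_diff θ a).hasGradientAt)
    (fun a θ _ => hpol_grad θ a) (fun a θ₁ _ θ₂ _ => hpol_smooth θ₁ θ₂ a)
    (fun θ _ => hphihat θ) (Set.mem_univ θ₁) (Set.mem_univ θ₂) hθ₁
end

section
/- For every θ ∈ ℝ^N with ‖θ‖ ≤ R and all ω₁, ω₂ ∈ ℝ^N, the stochastic update direction G(θ, ω) = δ(θ)φ − γ⟨ω, φ⟩φ̂(θ) satisfies ‖G(θ, ω₁) − G(θ, ω₂)‖ ≤ γ(|A| R k₁ + 1)‖ω₁ − ω₂‖, where |A| is the cardinality of A. -/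
open scoped RealInnerProductSpace BigOperators

/-!
For fixed `θ` the map `ω ↦ G(θ, ω)` is affine with linear part the rank-one operator
`ω ↦ -γ⟨ω, φ⟩φ̂(θ)`, so its Lipschitz constant is at most `|γ| ‖φ‖ ‖φ̂(θ)‖`. In `φ̂(θ)` each of the
gradient terms has norm at most `R k₁`, while the remaining terms form a convex combination of the
`φ'_a`, which stays in the unit ball.
-/

lemma norm_inner_smul_le {𝕜 E F : Type*} [RCLike 𝕜] [SeminormedAddCommGroup E]
    [InnerProductSpace 𝕜 E] [SeminormedAddCommGroup F] [NormedSpace 𝕜 F] (x y : E) (z : F) :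
    ‖inner 𝕜 x y • z‖ ≤ ‖x‖ * ‖y‖ * ‖z‖ := by
  rw [norm_smul]
  gcongr
  exact norm_inner_le_norm x y

lemma norm_sum_smul_le_of_sum_eq_one_s11 {ι E : Type*} [SeminormedAddCommGroup E] [NormedSpace ℝ E]
    {s : Finset ι} {w : ι → ℝ} {v : ι → E} {C : ℝ} (hw : ∀ i ∈ s, 0 ≤ w i)
    (hw_sum : ∑ i ∈ s, w i = 1) (hv : ∀ i ∈ s, ‖v i‖ ≤ C) :
    ‖∑ i ∈ s, w i • v i‖ ≤ C := by
  simp only [← mem_closedBall_zero_iff] at hv ⊢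
  exact (convex_closedBall 0 C).sum_mem hw hw_sum hv

section

variable {E A : Type*} [SeminormedAddCommGroup E] [InnerProductSpace ℝ E]

/-- The vector `φ̂ = ∑ₐ (⟨θ, φ'ₐ⟩ gₐ + pₐ φ'ₐ)`. When `p a = π_θ(a)` and `g a = ∇π_θ(a)` it is
the gradient at `θ` of the expected next-state value `∑ₐ π_θ(a)⟨θ, φ'ₐ⟩`. The vectors `g a` are
arbitrary so that the definition does not mention how the policy depends on `θ`. -/
def nextValueGradient [Fintype A] (p : A → ℝ) (g φ' : A → E) (θ : E) : E :=
  ∑ a, (⟪θ, φ' a⟫ • g a + p a • φ' a)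

/-- The stochastic update direction `δ φ - γ⟨ω, φ⟩ h` as a function of the auxiliary weights `ω`,
for a temporal-difference error `δ`; the paper's `G(θ, ω)` has `δ = δ(θ)` and `h = φ̂(θ)`. -/
def updateDirection (δ γ : ℝ) (φ h ω : E) : E :=
  δ • φ - (γ * ⟪ω, φ⟫) • h

lemma updateDirection_sub (δ γ : ℝ) (φ h ω₁ ω₂ : E) :
    updateDirection δ γ φ h ω₁ - updateDirection δ γ φ h ω₂ = -(γ • ⟪ω₁ - ω₂, φ⟫ • h) := by
  simp only [updateDirection, inner_sub_left]
  module

lemma norm_updateDirection_sub_le (δ γ : ℝ) (φ h ω₁ ω₂ : E) :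
    ‖updateDirection δ γ φ h ω₁ - updateDirection δ γ φ h ω₂‖
      ≤ |γ| * (‖ω₁ - ω₂‖ * ‖φ‖ * ‖h‖) := by
  rw [updateDirection_sub, norm_neg, norm_smul, Real.norm_eq_abs]
  gcongr
  exact norm_inner_smul_le _ _ _

lemma norm_nextValueGradient_le [Fintype A] {p : A → ℝ} {g φ' : A → E} {θ : E} {R C k : ℝ}
    (hp : ∀ a, 0 ≤ p a) (hp_sum : ∑ a, p a = 1) (hg : ∀ a, ‖g a‖ ≤ k)
    (hφ' : ∀ a, ‖φ' a‖ ≤ C) (hθ : ‖θ‖ ≤ R) :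
    ‖nextValueGradient p g φ' θ‖ ≤ Fintype.card A * (R * C * k) + C := by
  have hR : 0 ≤ R := (norm_nonneg θ).trans hθ
  have gradient_term (a : A) : ‖⟪θ, φ' a⟫ • g a‖ ≤ R * C * k := by
    have hC : 0 ≤ C := (norm_nonneg _).trans (hφ' a)
    calc ‖⟪θ, φ' a⟫ • g a‖ ≤ ‖θ‖ * ‖φ' a‖ * ‖g a‖ := norm_inner_smul_le _ _ _
      _ ≤ R * C * k := by gcongr <;> apply_assumption
  have gradient_part : ‖∑ a, ⟪θ, φ' a⟫ • g a‖ ≤ Fintype.card A * (R * C * k) := by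
    simpa only [Finset.sum_const, Finset.card_univ, nsmul_eq_mul] using
      norm_sum_le_of_le Finset.univ fun a _ ↦ gradient_term a
  have feature_part : ‖∑ a, p a • φ' a‖ ≤ C :=
    norm_sum_smul_le_of_sum_eq_one_s11 (fun a _ ↦ hp a) hp_sum fun a _ ↦ hφ' a
  rw [nextValueGradient, Finset.sum_add_distrib]
  exact norm_add_le_of_le gradient_part feature_part

theorem G_lipschitz_in_omega_general [Fintype A] {p : A → ℝ} {g φ' : A → E} {φ θ : E}
    {R k₁ : ℝ} (hp : ∀ a, 0 ≤ p a) (hp_sum : ∑ a, p a = 1) (hg : ∀ a, ‖g a‖ ≤ k₁)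
    (hφ : ‖φ‖ ≤ 1) (hφ' : ∀ a, ‖φ' a‖ ≤ 1) (hθ : ‖θ‖ ≤ R) (δ γ : ℝ) (ω₁ ω₂ : E) :
    ‖updateDirection δ γ φ (nextValueGradient p g φ' θ) ω₁
        - updateDirection δ γ φ (nextValueGradient p g φ' θ) ω₂‖
      ≤ |γ| * (Fintype.card A * R * k₁ + 1) * ‖ω₁ - ω₂‖ := by
  have hh := norm_nextValueGradient_le hp hp_sum hg hφ' hθ
  calc _ ≤ |γ| * (‖ω₁ - ω₂‖ * ‖φ‖ * ‖nextValueGradient p g φ' θ‖) :=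
        norm_updateDirection_sub_le _ _ _ _ _ _
    _ ≤ |γ| * (‖ω₁ - ω₂‖ * 1 * (Fintype.card A * (R * 1 * k₁) + 1)) := by gcongr
    _ = |γ| * (Fintype.card A * R * k₁ + 1) * ‖ω₁ - ω₂‖ := by ring

end

/-- Lipschitz continuity in `ω` of the update direction
`G(θ, ω) = δ(θ)φ − γ⟨ω, φ⟩φ̂(θ)`:
for `‖θ‖ ≤ R`, `‖G(θ, ω₁) − G(θ, ω₂)‖ ≤ γ(|A| R k₁ + 1)‖ω₁ − ω₂‖`. -/
theorem G_lipschitz_in_omega (N : ℕ) {A : Type*} [Fintype A] [Nonempty A]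
    (φ : EuclideanSpace ℝ (Fin N)) (hφ : ‖φ‖ ≤ 1)
    (φ' : A → EuclideanSpace ℝ (Fin N)) (hφ' : ∀ a, ‖φ' a‖ ≤ 1)
    (γ : ℝ) (hγ : γ ∈ Set.Ioo (0 : ℝ) 1)
    (r rmax : ℝ) (hr : 0 ≤ r) (hrmax : r ≤ rmax)
    (pol : EuclideanSpace ℝ (Fin N) → A → ℝ)
    (hpol_nonneg : ∀ θ a, 0 ≤ pol θ a)
    (hpol_sum : ∀ θ, ∑ a : A, pol θ a = 1)
    (hpol_diff : ∀ θ a, DifferentiableAt ℝ (fun θ' => pol θ' a) θ)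
    (k₁ : ℝ)
    (hpol_grad : ∀ θ a, ‖gradient (fun θ' => pol θ' a) θ‖ ≤ k₁)
    (δ : EuclideanSpace ℝ (Fin N) → ℝ)
    (hδ : ∀ θ, δ θ = r + γ * ∑ a : A, pol θ a * ⟪θ, φ' a⟫ - ⟪θ, φ⟫)
    (phihat : EuclideanSpace ℝ (Fin N) → EuclideanSpace ℝ (Fin N))
    (hphihat : ∀ θ, phihat θ = ∑ a : A,
      (⟪θ, φ' a⟫ • gradient (fun θ' => pol θ' a) θ + pol θ a • φ' a))
    (G : EuclideanSpace ℝ (Fin N) → EuclideanSpace ℝ (Fin N) → EuclideanSpace ℝ (Fin N))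
    (hG : ∀ θ ω, G θ ω = δ θ • φ - (γ * ⟪ω, φ⟫) • phihat θ)
    (R : ℝ) (hR : 0 < R)
    (θ : EuclideanSpace ℝ (Fin N)) (hθ : ‖θ‖ ≤ R)
    (ω₁ ω₂ : EuclideanSpace ℝ (Fin N)) :
    ‖G θ ω₁ - G θ ω₂‖ ≤ γ * ((Fintype.card A) * R * k₁ + 1) * ‖ω₁ - ω₂‖ := by
  simpa only [hG, hphihat, updateDirection, nextValueGradient, abs_of_pos hγ.1] using
    G_lipschitz_in_omega_general (hpol_nonneg θ) (hpol_sum θ) (hpol_grad θ) hφ hφ' hθ (δ θ) γ ω₁ ω₂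
end

section
/- For all θ, θ₁, θ₂ ∈ ℝ^N with ‖θ‖ ≤ R, ‖θ₁‖ ≤ R, ‖θ₂‖ ≤ R, and all z, z₁, z₂ ∈ ℝ^N with ‖z‖ ≤ 2R, ‖z₁‖ ≤ 2R, ‖z₂‖ ≤ 2R, the function ζ_{f₂}(θ, z) = ⟨z, f₂(θ)⟩ with f₂(θ) = (δ(θ) − ⟨φ, ω*(θ)⟩)φ satisfies |ζ_{f₂}(θ, z)| ≤ 2R c_{f₂} and |ζ_{f₂}(θ₁, z₁) − ζ_{f₂}(θ₂, z₂)| ≤ k_{f₂}‖θ₁ − θ₂‖ + c_{f₂}‖z₁ − z₂‖, where c_{f₂} = (r_max + (1+γ)R)(1 + 1/λ), k_{f₂} = 2R(1 + γ + γRk₁|A|)(1 + 1/λ), and |A| is the cardinality of A. -/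
open scoped RealInnerProductSpace BigOperators

/-! The map `f₂` is bounded by `c_{f₂}` and Lipschitz on the ball of radius `R`, and pairing such a
map with a bounded `z` gives the estimates for `ζ_{f₂}`. The sum over actions in `δ(θ)` equals
`⟪θ, ψ(θ)⟫`, where `ψ(θ)` averages the next features against `π_θ`; this average has norm at most
one, and `‖ψ(θ₁) - ψ(θ₂)‖ ≤ |A| k₁ ‖θ₁ - θ₂‖`. Finally `(δ, ω) ↦ (δ - ⟪φ, ω⟫) φ` is linear, so one
norm bound for it controls both the size of `f₂` and its increments. -/

section WeightedSums

variable {ι F : Type*} [Fintype ι] [SeminormedAddCommGroup F] [NormedSpace ℝ F]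
  {p q : ι → ℝ} {v : ι → F} {C K : ℝ}

theorem norm_sum_smul_le_of_mem_stdSimplex (hp : p ∈ stdSimplex ℝ ι) (hv : ∀ i, ‖v i‖ ≤ C) :
    ‖∑ i, p i • v i‖ ≤ C :=
  mem_closedBall_zero_iff.mp <| (convex_closedBall (0 : F) C).sum_mem (fun i _ => hp.1 i) hp.2
    fun i _ => mem_closedBall_zero_iff.mpr (hv i)

theorem norm_sum_smul_sub_sum_smul_le_s15 (hpq : ∀ i, |p i - q i| ≤ K) (hv : ∀ i, ‖v i‖ ≤ C) :
    ‖∑ i, p i • v i - ∑ i, q i • v i‖ ≤ Fintype.card ι * (K * C) := by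
  have term_le (i : ι) : ‖p i • v i - q i • v i‖ ≤ K * C := by
    rw [← sub_smul, norm_smul, Real.norm_eq_abs]
    exact mul_le_mul (hpq i) (hv i) (norm_nonneg _) ((abs_nonneg _).trans (hpq i))
  calc ‖∑ i, p i • v i - ∑ i, q i • v i‖
      = ‖∑ i, (p i • v i - q i • v i)‖ := by rw [Finset.sum_sub_distrib]
    _ ≤ ∑ _i : ι, K * C := norm_sum_le_of_le _ fun i _ => term_le i
    _ = Fintype.card ι * (K * C) := by rw [Finset.sum_const, Finset.card_univ, nsmul_eq_mul]

end WeightedSums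

section InnerProduct

variable {E : Type*} [SeminormedAddCommGroup E] [InnerProductSpace ℝ E]

theorem abs_real_inner_le_of_norm_le_one (x : E) {y : E} (hy : ‖y‖ ≤ 1) : |⟪x, y⟫| ≤ ‖x‖ :=
  (abs_real_inner_le_norm x y).trans (mul_le_of_le_one_right (norm_nonneg x) hy)

theorem abs_real_inner_sub_inner_le (x₁ x₂ y₁ y₂ : E) :
    |⟪x₁, y₁⟫ - ⟪x₂, y₂⟫| ≤ ‖x₁‖ * ‖y₁ - y₂‖ + ‖x₁ - x₂‖ * ‖y₂‖ :=
  calc |⟪x₁, y₁⟫ - ⟪x₂, y₂⟫|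
      = |⟪x₁, y₁ - y₂⟫ + ⟪x₁ - x₂, y₂⟫| := by
        rw [inner_sub_right, inner_sub_left, sub_add_sub_cancel]
    _ ≤ |⟪x₁, y₁ - y₂⟫| + |⟪x₁ - x₂, y₂⟫| := abs_add_le _ _
    _ ≤ ‖x₁‖ * ‖y₁ - y₂‖ + ‖x₁ - x₂‖ * ‖y₂‖ :=
        add_le_add (abs_real_inner_le_norm _ _) (abs_real_inner_le_norm _ _)

end InnerProduct

section TemporalDifference

variable {E A : Type*} [SeminormedAddCommGroup E] [InnerProductSpace ℝ E] [Fintype A]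

/-- The expected temporal-difference error `δ(θ)` of the linear value function with parameter `θ`,
at current feature `φ` and next features `φ' a`. The action probabilities enter as a separate
vector `p`; the paper's `δ(θ)` is the case `p = π_θ`. -/
def tdError (γ r : ℝ) (φ : E) (φ' : A → E) (p : A → ℝ) (θ : E) : ℝ :=
  r + γ * ∑ a, p a * ⟪θ, φ' a⟫ - ⟪θ, φ⟫

/-- The gradient-corrected update direction `f₂ = (δ - ⟪φ, ω⟫) φ`, as a function of the
temporal-difference error `δ` and the correction vector `ω`. -/
def correctedDirection (φ : E) (δ : ℝ) (ω : E) : E :=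
  (δ - ⟪φ, ω⟫) • φ

variable {γ r rmax R K : ℝ} {φ : E} {φ' : A → E}

theorem tdError_eq_inner_sum (γ r : ℝ) (φ : E) (φ' : A → E) (p : A → ℝ) (θ : E) :
    tdError γ r φ φ' p θ = r + γ * ⟪θ, ∑ a, p a • φ' a⟫ - ⟪θ, φ⟫ := by
  simp only [tdError, inner_sum, real_inner_smul_right]

theorem abs_tdError_le {p : A → ℝ} {θ : E} (hφ : ‖φ‖ ≤ 1) (hφ' : ∀ a, ‖φ' a‖ ≤ 1) (hγ : 0 ≤ γ)
    (hr : |r| ≤ rmax) (hp : p ∈ stdSimplex ℝ A) (hθ : ‖θ‖ ≤ R) :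
    |tdError γ r φ φ' p θ| ≤ rmax + (1 + γ) * R := by
  rw [tdError_eq_inner_sum]
  set ψ := ∑ a, p a • φ' a
  have hψ : |⟪θ, ψ⟫| ≤ R :=
    (abs_real_inner_le_of_norm_le_one θ (norm_sum_smul_le_of_mem_stdSimplex hp hφ')).trans hθ
  have hθφ : |⟪θ, φ⟫| ≤ R := (abs_real_inner_le_of_norm_le_one θ hφ).trans hθ
  calc |r + γ * ⟪θ, ψ⟫ - ⟪θ, φ⟫|
      ≤ |r| + |γ * ⟪θ, ψ⟫| + |⟪θ, φ⟫| :=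
        (abs_sub _ _).trans (add_le_add_left (abs_add_le _ _) _)
    _ = |r| + γ * |⟪θ, ψ⟫| + |⟪θ, φ⟫| := by rw [abs_mul, abs_of_nonneg hγ]
    _ ≤ rmax + γ * R + R := by gcongr
    _ = rmax + (1 + γ) * R := by ring

theorem abs_tdError_sub_le {p₁ p₂ : A → ℝ} {θ₁ θ₂ : E} (hφ : ‖φ‖ ≤ 1) (hφ' : ∀ a, ‖φ' a‖ ≤ 1)
    (hγ : 0 ≤ γ) (hp₂ : p₂ ∈ stdSimplex ℝ A) (hp : ∀ a, |p₁ a - p₂ a| ≤ K) (hθ₁ : ‖θ₁‖ ≤ R) :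
    |tdError γ r φ φ' p₁ θ₁ - tdError γ r φ φ' p₂ θ₂| ≤
      (1 + γ) * ‖θ₁ - θ₂‖ + γ * R * Fintype.card A * K := by
  rw [tdError_eq_inner_sum, tdError_eq_inner_sum]
  set ψ₁ := ∑ a, p₁ a • φ' a
  set ψ₂ := ∑ a, p₂ a • φ' a
  have hψ₂ : ‖ψ₂‖ ≤ 1 := norm_sum_smul_le_of_mem_stdSimplex hp₂ hφ'
  have hψ : ‖ψ₁ - ψ₂‖ ≤ Fintype.card A * (K * 1) := norm_sum_smul_sub_sum_smul_le_s15 hp hφ'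
  have hinner : |⟪θ₁, ψ₁⟫ - ⟪θ₂, ψ₂⟫| ≤ R * (Fintype.card A * (K * 1)) + ‖θ₁ - θ₂‖ * 1 :=
    (abs_real_inner_sub_inner_le θ₁ θ₂ ψ₁ ψ₂).trans <| add_le_add
      (mul_le_mul hθ₁ hψ (norm_nonneg _) ((norm_nonneg _).trans hθ₁))
      (mul_le_mul_of_nonneg_left hψ₂ (norm_nonneg _))
  calc |r + γ * ⟪θ₁, ψ₁⟫ - ⟪θ₁, φ⟫ - (r + γ * ⟪θ₂, ψ₂⟫ - ⟪θ₂, φ⟫)|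
      = |γ * (⟪θ₁, ψ₁⟫ - ⟪θ₂, ψ₂⟫) - ⟪θ₁ - θ₂, φ⟫| := by rw [inner_sub_left]; ring_nf
    _ ≤ |γ * (⟪θ₁, ψ₁⟫ - ⟪θ₂, ψ₂⟫)| + |⟪θ₁ - θ₂, φ⟫| := abs_sub _ _
    _ = γ * |⟪θ₁, ψ₁⟫ - ⟪θ₂, ψ₂⟫| + |⟪θ₁ - θ₂, φ⟫| := by rw [abs_mul, abs_of_nonneg hγ]
    _ ≤ γ * (R * (Fintype.card A * (K * 1)) + ‖θ₁ - θ₂‖ * 1) + ‖θ₁ - θ₂‖ := by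
        gcongr
        exact abs_real_inner_le_of_norm_le_one _ hφ
    _ = (1 + γ) * ‖θ₁ - θ₂‖ + γ * R * Fintype.card A * K := by ring

theorem correctedDirection_sub (φ : E) (δ₁ δ₂ : ℝ) (ω₁ ω₂ : E) :
    correctedDirection φ δ₁ ω₁ - correctedDirection φ δ₂ ω₂ =
      correctedDirection φ (δ₁ - δ₂) (ω₁ - ω₂) := by
  simp only [correctedDirection, ← sub_smul, inner_sub_right, sub_sub_sub_comm]

theorem norm_correctedDirection_le (hφ : ‖φ‖ ≤ 1) (δ : ℝ) (ω : E) :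
    ‖correctedDirection φ δ ω‖ ≤ |δ| + ‖ω‖ :=
  calc ‖correctedDirection φ δ ω‖
      = |δ - ⟪φ, ω⟫| * ‖φ‖ := norm_smul _ _
    _ ≤ |δ - ⟪φ, ω⟫| := mul_le_of_le_one_right (abs_nonneg _) hφ
    _ ≤ |δ| + |⟪φ, ω⟫| := abs_sub _ _
    _ ≤ |δ| + ‖ω‖ := by
        rw [real_inner_comm]
        gcongr
        exact abs_real_inner_le_of_norm_le_one ω hφ

theorem zeta_f2_bounds_general {pol : E → A → ℝ} {k₁ κ ρ : ℝ} {ω : E → E}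
    (hφ : ‖φ‖ ≤ 1) (hφ' : ∀ a, ‖φ' a‖ ≤ 1) (hγ : 0 ≤ γ) (hr : |r| ≤ rmax)
    (hpol : ∀ θ, pol θ ∈ stdSimplex ℝ A)
    (hpol_lip : ∀ θ₁ θ₂ a, |pol θ₁ a - pol θ₂ a| ≤ k₁ * ‖θ₁ - θ₂‖)
    (hω_bound : ∀ θ, ‖θ‖ ≤ R → ‖ω θ‖ ≤ κ * (rmax + (1 + γ) * R))
    (hω_lip : ∀ θ₁ θ₂, ‖θ₁‖ ≤ R → ‖θ₂‖ ≤ R →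
      ‖ω θ₁ - ω θ₂‖ ≤ κ * (1 + γ + γ * R * Fintype.card A * k₁) * ‖θ₁ - θ₂‖) :
    (∀ θ z : E, ‖θ‖ ≤ R → ‖z‖ ≤ ρ →
      |⟪z, correctedDirection φ (tdError γ r φ φ' (pol θ) θ) (ω θ)⟫| ≤
        ρ * ((rmax + (1 + γ) * R) * (1 + κ))) ∧
    (∀ θ₁ θ₂ z₁ z₂ : E, ‖θ₁‖ ≤ R → ‖θ₂‖ ≤ R → ‖z₁‖ ≤ ρ →
      |⟪z₁, correctedDirection φ (tdError γ r φ φ' (pol θ₁) θ₁) (ω θ₁)⟫ -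
          ⟪z₂, correctedDirection φ (tdError γ r φ φ' (pol θ₂) θ₂) (ω θ₂)⟫| ≤
        (ρ * (1 + γ + γ * R * k₁ * Fintype.card A) * (1 + κ)) * ‖θ₁ - θ₂‖ +
          ((rmax + (1 + γ) * R) * (1 + κ)) * ‖z₁ - z₂‖) := by
  set f : E → E := fun θ => correctedDirection φ (tdError γ r φ φ' (pol θ) θ) (ω θ)
  have hf_bound {θ : E} (hθ : ‖θ‖ ≤ R) : ‖f θ‖ ≤ (rmax + (1 + γ) * R) * (1 + κ) := by
    linarith [norm_correctedDirection_le hφ (tdError γ r φ φ' (pol θ) θ) (ω θ),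
      abs_tdError_le hφ hφ' hγ hr (hpol θ) hθ, hω_bound θ hθ]
  have hf_lip {θ₁ θ₂ : E} (hθ₁ : ‖θ₁‖ ≤ R) (hθ₂ : ‖θ₂‖ ≤ R) : ‖f θ₁ - f θ₂‖ ≤
      (1 + γ + γ * R * k₁ * Fintype.card A) * (1 + κ) * ‖θ₁ - θ₂‖ := by
    rw [correctedDirection_sub]
    refine (norm_correctedDirection_le hφ _ _).trans ?_
    linarith [abs_tdError_sub_le (r := r) (θ₂ := θ₂) hφ hφ' hγ (hpol θ₂) (hpol_lip θ₁ θ₂) hθ₁,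
      hω_lip θ₁ θ₂ hθ₁ hθ₂]
  refine ⟨fun θ z hθ hz => ?_, fun θ₁ θ₂ z₁ z₂ hθ₁ hθ₂ hz₁ => ?_⟩
  · exact (abs_real_inner_le_norm z (f θ)).trans <|
      mul_le_mul hz (hf_bound hθ) (norm_nonneg _) ((norm_nonneg _).trans hz)
  · calc |⟪z₁, f θ₁⟫ - ⟪z₂, f θ₂⟫|
        ≤ ‖z₁‖ * ‖f θ₁ - f θ₂‖ + ‖z₁ - z₂‖ * ‖f θ₂‖ := abs_real_inner_sub_inner_le _ _ _ _
      _ ≤ ρ * ((1 + γ + γ * R * k₁ * Fintype.card A) * (1 + κ) * ‖θ₁ - θ₂‖) +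
          ‖z₁ - z₂‖ * ((rmax + (1 + γ) * R) * (1 + κ)) :=
        add_le_add
          (mul_le_mul hz₁ (hf_lip hθ₁ hθ₂) (norm_nonneg _) ((norm_nonneg _).trans hz₁))
          (mul_le_mul_of_nonneg_left (hf_bound hθ₂) (norm_nonneg _))
      _ = _ := by ring

end TemporalDifference

/-- Bounds on `ζ_{f₂}(θ, z) = ⟨z, f₂(θ)⟩` with `f₂(θ) = (δ(θ) − ⟨φ, ω*(θ)⟩)φ`:
for `‖θ‖ ≤ R` and `‖z‖ ≤ 2R`, `|ζ_{f₂}(θ, z)| ≤ 2R c_{f₂}`, and `ζ_{f₂}` is jointly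
Lipschitz: `|ζ_{f₂}(θ₁, z₁) − ζ_{f₂}(θ₂, z₂)| ≤ k_{f₂}‖θ₁ − θ₂‖ + c_{f₂}‖z₁ − z₂‖`. -/
theorem zeta_f2_bounds (N : ℕ) {A : Type*} [Fintype A] [Nonempty A]
    (φ : EuclideanSpace ℝ (Fin N)) (hφ : ‖φ‖ ≤ 1)
    (φ' : A → EuclideanSpace ℝ (Fin N)) (hφ' : ∀ a, ‖φ' a‖ ≤ 1)
    (γ : ℝ) (hγ : γ ∈ Set.Ioo (0 : ℝ) 1)
    (r rmax : ℝ) (hr : 0 ≤ r) (hrmax : r ≤ rmax)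
    (pol : EuclideanSpace ℝ (Fin N) → A → ℝ)
    (hpol_nonneg : ∀ θ a, 0 ≤ pol θ a)
    (hpol_sum : ∀ θ, ∑ a : A, pol θ a = 1)
    (k₁ : ℝ)
    (hpol_lip : ∀ θ₁ θ₂ a, |pol θ₁ a - pol θ₂ a| ≤ k₁ * ‖θ₁ - θ₂‖)
    (δ : EuclideanSpace ℝ (Fin N) → ℝ)
    (hδ : ∀ θ, δ θ = r + γ * ∑ a : A, pol θ a * ⟪θ, φ' a⟫ - ⟪θ, φ⟫)
    (R lam : ℝ) (hR : 0 < R) (hlam : 0 < lam)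
    (ωstar : EuclideanSpace ℝ (Fin N) → EuclideanSpace ℝ (Fin N))
    (hωstar_bound : ∀ θ, ‖θ‖ ≤ R → ‖ωstar θ‖ ≤ (1 / lam) * (rmax + (1 + γ) * R))
    (hωstar_lip : ∀ θ₁ θ₂, ‖θ₁‖ ≤ R → ‖θ₂‖ ≤ R →
      ‖ωstar θ₁ - ωstar θ₂‖ ≤
        (1 / lam) * (1 + γ + γ * R * (Fintype.card A) * k₁) * ‖θ₁ - θ₂‖)
    (f₂ : EuclideanSpace ℝ (Fin N) → EuclideanSpace ℝ (Fin N))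
    (hf₂ : ∀ θ, f₂ θ = (δ θ - ⟪φ, ωstar θ⟫) • φ)
    (ζ : EuclideanSpace ℝ (Fin N) → EuclideanSpace ℝ (Fin N) → ℝ)
    (hζ : ∀ θ z, ζ θ z = ⟪z, f₂ θ⟫) :
    (∀ θ z : EuclideanSpace ℝ (Fin N), ‖θ‖ ≤ R → ‖z‖ ≤ 2 * R →
      |ζ θ z| ≤ 2 * R * ((rmax + (1 + γ) * R) * (1 + 1 / lam))) ∧
    (∀ θ₁ θ₂ z₁ z₂ : EuclideanSpace ℝ (Fin N),
      ‖θ₁‖ ≤ R → ‖θ₂‖ ≤ R → ‖z₁‖ ≤ 2 * R → ‖z₂‖ ≤ 2 * R →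
      |ζ θ₁ z₁ - ζ θ₂ z₂| ≤
        (2 * R * (1 + γ + γ * R * k₁ * (Fintype.card A)) * (1 + 1 / lam)) * ‖θ₁ - θ₂‖
          + ((rmax + (1 + γ) * R) * (1 + 1 / lam)) * ‖z₁ - z₂‖) := by
  simp only [hζ, hf₂, hδ]
  obtain ⟨hbound, hlip⟩ := zeta_f2_bounds_general (κ := 1 / lam) (ρ := 2 * R) hφ hφ' hγ.1.le
    ((abs_of_nonneg hr).trans_le hrmax) (fun θ => ⟨hpol_nonneg θ, hpol_sum θ⟩) hpol_lip
    hωstar_bound hωstar_lip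
  exact ⟨hbound, fun θ₁ θ₂ z₁ z₂ hθ₁ hθ₂ hz₁ _ => hlip θ₁ θ₂ z₁ z₂ hθ₁ hθ₂ hz₁⟩
end
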